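/- There is no algebra homomorphism π : C([0,1], ℂ) → M₂(ℂ) (2×2 complex matrices) which is continuous with respect to the supremum norm on C([0,1], ℂ) and satisfies: for every infinitely differentiable function g : ℝ → ℂ, π(g|_{[0,1]}) is the upper triangular matrix with diagonal entries g(0), g(0) and upper-right entry g′(0). -/

import Mathlib

/-- There is no sup-norm-continuous algebra homomorphism
`π : C([0,1], ℂ) → M₂(ℂ)` sending the restriction of every smooth `g : ℝ → ℂ` to the
upper triangular matrix `[[g 0, g' 0], [0, g 0]]` (the non-extension example of §2). -/
theorem no_continuous_extension_of_jet_representation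
    (π : C(Set.Icc (0 : ℝ) 1, ℂ) →ₐ[ℂ] Matrix (Fin 2) (Fin 2) ℂ)
    (hcont : Continuous π)
    (hval : ∀ g : ℝ → ℂ, ContDiff ℝ (⊤ : ℕ∞) g →
      ∀ G : C(Set.Icc (0 : ℝ) 1, ℂ), (∀ x : Set.Icc (0 : ℝ) 1, G x = g (x : ℝ)) →
        π G = !![g 0, deriv g 0; 0, g 0]) :
    False := by
  -- The coordinate function `x` has the continuous square root `√x` on `[0,1]`, whereas its
  -- image under `π`, the nilpotent Jordan block `[[0, 1], [0, 0]]`, has no square root in `M₂(ℂ)`.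
  let S : C(Set.Icc (0 : ℝ) 1, ℂ) := ⟨fun x => ((Real.sqrt (x : ℝ) : ℝ) : ℂ), by fun_prop⟩
  have hSS : ∀ x : Set.Icc (0 : ℝ) 1, (S * S) x = ((x : ℝ) : ℂ) := fun x => by
    change ((Real.sqrt (x : ℝ) : ℝ) : ℂ) * ((Real.sqrt (x : ℝ) : ℝ) : ℂ) = _
    rw [← Complex.ofReal_mul, Real.mul_self_sqrt x.2.1]
  have hderiv : deriv (fun t : ℝ => (t : ℂ)) 0 = 1 :=
    (HasDerivAt.ofReal_comp (hasDerivAt_id (0 : ℝ))).deriv.trans (by simp)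
  have h := hval (fun t : ℝ => (t : ℂ)) Complex.ofRealCLM.contDiff (S * S) hSS
  rw [map_mul, hderiv] at h
  generalize π S = A at h
  have h00 := congrFun (congrFun h 0) 0
  have h01 := congrFun (congrFun h 0) 1
  have h10 := congrFun (congrFun h 1) 0
  have h11 := congrFun (congrFun h 1) 1
  simp only [Matrix.mul_apply, Fin.sum_univ_two, Matrix.of_apply, Matrix.cons_val_zero,
    Matrix.cons_val_one, Complex.ofReal_zero] at h00 h01 h10 h11
  -- The off-diagonal entries of `A * A` are `A 0 1 * tr A = 1` and `A 1 0 * tr A = 0`.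
  have hc : A 1 0 = 0 := by
    linear_combination (A 0 1) * h10 - (A 1 0) * h01
  have ha : A 0 0 = 0 := by simpa [hc] using h00
  have hd : A 1 1 = 0 := by simpa [hc] using h11
  simp [ha, hd] at h01
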